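/- Let β ∈ (1,2) be a multinacci number. Then for every t ∈ B_β and every r > 0, the interval (t, t + r) contains infinitely many β-Lyndon intervals. -/

import Mathlib

open Set Filter MeasureTheory

/-- The β-transformation `x ↦ βx (mod 1)`. -/
noncomputable def Tbeta (β x : ℝ) : ℝ := Int.fract (β * x)

/-- The survivor set `K_β(t) = {x ∈ [0,1) : T_β^n x ≥ t for all n ≥ 0}`. -/
def Kset (β t : ℝ) : Set ℝ := {x | x ∈ Set.Ico (0 : ℝ) 1 ∧ ∀ n : ℕ, t ≤ (Tbeta β)^[n] x}

/-- Strict lexicographic order on sequences of naturals. -/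
def seqLt (x y : ℕ → ℕ) : Prop := ∃ n, (∀ i, i < n → x i = y i) ∧ x n < y n

/-- Lexicographic order on sequences of naturals. -/
def seqLe (x y : ℕ → ℕ) : Prop := x = y ∨ seqLt x y

/-- The `n`-th iterate of the left shift. -/
def shiftN (n : ℕ) (x : ℕ → ℕ) : ℕ → ℕ := fun i => x (i + n)

/-- The sequence `w 0^∞`. -/
def wordSeq (w : List ℕ) : ℕ → ℕ := fun i => w.getD i 0

/-- The periodic sequence `w^∞`. -/
def perSeq (w : List ℕ) : ℕ → ℕ := fun i => w.getD (i % w.length) 0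

/-- The sequence obtained by concatenating the word `w` with the sequence `x`. -/
def catSeq (w : List ℕ) (x : ℕ → ℕ) : ℕ → ℕ :=
  fun i => if i < w.length then w.getD i 0 else x (i - w.length)

/-- The greedy β-expansion of `t`: the digit `b_{i+1}` is `⌊β T_β^i t⌋`. -/
noncomputable def greedy (β t : ℝ) : ℕ → ℕ := fun i => (⌊β * (Tbeta β)^[i] t⌋).toNat

/-- `d` is the quasi-greedy β-expansion of `1`: the lexicographically largest
sequence in `{0,1}^ℕ` not ending in `0^∞` whose digits sum to `1` in base `β`. -/
def IsQuasiGreedy (β : ℝ) (d : ℕ → ℕ) : Prop :=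
  (∀ i, d i ≤ 1) ∧ (¬ ∃ N, ∀ n, N ≤ n → d n = 0) ∧
  (∑' i : ℕ, (d i : ℝ) / β ^ (i + 1) = 1) ∧
  ∀ e : ℕ → ℕ, (∀ i, e i ≤ 1) → (¬ ∃ N, ∀ n, N ≤ n → e n = 0) →
    (∑' i : ℕ, (e i : ℝ) / β ^ (i + 1) = 1) → seqLe e d

/-- `s = s_1…s_p` is a β-Lyndon word: `s_{i+1}…s_p ≻ s_1…s_{p-i}` for `1 ≤ i < p`
and `σ^n(s^∞) ≺ δ(β)` for all `n ≥ 0`. -/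
def IsBetaLyndon (β : ℝ) (s : List ℕ) : Prop :=
  s ≠ [] ∧ (∀ a ∈ s, a ≤ 1) ∧
  (∀ i, 1 ≤ i → i < s.length →
    seqLt (wordSeq (s.take (s.length - i))) (wordSeq (s.drop i))) ∧
  (∀ d : ℕ → ℕ, IsQuasiGreedy β d → ∀ n : ℕ, seqLt (shiftN n (perSeq s)) d)

/-- Left endpoint `t_L = Σ_{i=1}^p s_i β^{-i}` of the β-Lyndon interval generated by `s`. -/
noncomputable def lyndonLeft (β : ℝ) (s : List ℕ) : ℝ :=
  ∑ i ∈ Finset.range s.length, (s.getD i 0 : ℝ) / β ^ (i + 1)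

/-- Right endpoint `t_R = (β^p/(β^p - 1)) t_L` of the β-Lyndon interval generated by `s`. -/
noncomputable def lyndonRight (β : ℝ) (s : List ℕ) : ℝ :=
  β ^ s.length / (β ^ s.length - 1) * lyndonLeft β s

/-- The union of all β-Lyndon intervals `[t_L, t_R)`. -/
noncomputable def lyndonUnionIco (β : ℝ) : Set ℝ :=
  ⋃ s ∈ {s : List ℕ | IsBetaLyndon β s}, Set.Ico (lyndonLeft β s) (lyndonRight β s)

/-- The symbolic survivor set `K̃_β(t)` with upper bound sequence `d = δ(β)`. -/
def Ktilde (β t : ℝ) (d : ℕ → ℕ) : Set (ℕ → ℕ) :=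
  {x | (∀ i, x i ≤ 1) ∧ ∀ n : ℕ, seqLe (greedy β t) (shiftN n x) ∧ seqLe (shiftN n x) d}

/-- The set-valued bifurcation set `E_β`. -/
def Eset (β : ℝ) : Set ℝ :=
  {t | t ∈ Set.Ico (0 : ℝ) 1 ∧ ∀ t', t < t' → t' < 1 → Kset β t' ≠ Kset β t}

/-- The dimension bifurcation set `B_β`. -/
def Bset (β : ℝ) : Set ℝ :=
  {t | t ∈ Set.Ico (0 : ℝ) 1 ∧ ∀ t', t < t' → t' < 1 → dimH (Kset β t') ≠ dimH (Kset β t)}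

/-- `β` is a multinacci number: `β^{m+1} = β^m + ⋯ + β + 1` for some `m ≥ 1`. -/
def IsMultinacci (β : ℝ) : Prop :=
  ∃ m : ℕ, 1 ≤ m ∧ β ^ (m + 1) = ∑ i ∈ Finset.range (m + 1), β ^ i

/-!
A point `t ∈ E_β` survives its own threshold: `t ≤ T_β^n t` for all `n`, because the iterates of
`T_β` are right-continuous. Hence its greedy expansion `b = b_0 b_1 …` is lexicographically at most
each of its shifts, and whenever `b_n = 0` the word `b_0 … b_{n-1} 1` satisfies the first Lyndon
condition. Its left endpoint lies in `(t, t + β^{-(n+1)}]`, so the intervals obtained in this way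
shrink to `t`.

For the second condition, the multinacci equation says that `1^{m+1}` and `(1^m 0)^∞` are expansions
of `1`. Thus `b` never contains `1^{m+1}` and never ends in `(1^m 0)^∞`, so infinitely often two
zeros of `b` are at distance at most `m`. If the later of two such zeros is at `n`, replacing it by
`1` creates no run `1^{m+1}`, and an earlier such pair of zeros prevents `(b_0 … b_{n-1} 1)^∞` from
having a shift equal to `(1^m 0)^∞`.
-/

lemma infinite_of_forall_gt_exists_subset_Ioo {α : Type*} [LinearOrder α] [NoMaxOrder α] {t : α}
    {𝒮 : Set (Set α)} (h : ∀ u > t, ∃ I ∈ 𝒮, I.Nonempty ∧ I ⊆ Ioo t u) : 𝒮.Infinite := by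
  intro hfin
  have : Nonempty α := ⟨t⟩
  choose! x hx using fun (I : Set α) (hI : I.Nonempty) => hI
  obtain ⟨u, htu⟩ := exists_gt t
  obtain ⟨I, hI, hne, hsub⟩ := h u htu
  obtain ⟨J, ⟨-, hJne, hJsub⟩, hmin⟩ := exists_min_image {I ∈ 𝒮 | I.Nonempty ∧ I ⊆ Ioi t} x
    (hfin.sep _) ⟨I, hI, hne, hsub.trans Ioo_subset_Ioi_self⟩
  obtain ⟨I', hI', hne', hsub'⟩ := h (x J) (hJsub (hx J hJne))
  exact (hsub' (hx I' hne')).2.not_ge (hmin I' ⟨hI', hne', hsub'.trans Ioo_subset_Ioi_self⟩)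

section Lexicographic

variable {x y z : ℕ → ℕ}

lemma seqLt.trans_seqLe (hxy : seqLt x y) (hyz : seqLe y z) : seqLt x z := by
  obtain ⟨k, hk, hk'⟩ := hxy
  rcases hyz with rfl | ⟨l, hl, hl'⟩
  · exact ⟨k, hk, hk'⟩
  rcases lt_trichotomy k l with h | rfl | h
  · exact ⟨k, fun i hi => (hk i hi).trans (hl i (hi.trans h)), hl k h ▸ hk'⟩
  · exact ⟨k, fun i hi => (hk i hi).trans (hl i hi), hk'.trans hl'⟩
  · exact ⟨l, fun i hi => (hk i (hi.trans h)).trans (hl i hi), hk l h ▸ hl'⟩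

lemma seqLe_of_forall_agree_imp_le (h : ∀ k, (∀ i < k, x i = y i) → x k ≤ y k) : seqLe x y := by
  refine or_iff_not_imp_left.2 fun hne => ⟨PiNat.firstDiff x y, fun i hi => ?_, ?_⟩
  · exact PiNat.apply_eq_of_lt_firstDiff hi
  · exact (h _ fun i hi => PiNat.apply_eq_of_lt_firstDiff hi).lt_of_ne
      (PiNat.apply_firstDiff_ne hne)

lemma seqLe.lt_before_or_le_at (hxy : seqLe x y) (k : ℕ) :
    (∃ l < k, (∀ i < l, x i = y i) ∧ x l < y l) ∨ ((∀ i < k, x i = y i) ∧ x k ≤ y k) := by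
  rcases hxy with rfl | ⟨l, hl, hl'⟩
  · exact Or.inr ⟨fun _ _ => rfl, le_rfl⟩
  rcases lt_trichotomy l k with h | rfl | h
  · exact Or.inl ⟨l, h, hl, hl'⟩
  · exact Or.inr ⟨hl, hl'.le⟩
  · exact Or.inr ⟨fun i hi => hl i (hi.trans h), (hl k h).le⟩

end Lexicographic

section Words

variable {w : List ℕ} {c i k : ℕ}

lemma wordSeq_take_of_lt (h : i < k) : wordSeq (w.take k) i = w.getD i 0 := by
  simp [wordSeq, List.getElem?_take_of_lt h]

lemma wordSeq_drop (w : List ℕ) (k : ℕ) : wordSeq (w.drop k) = shiftN k (wordSeq w) := by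
  funext i
  simp [wordSeq, shiftN, add_comm]

lemma perSeq_add_mul_length (w : List ℕ) (i q : ℕ) : perSeq w (i + q * w.length) = perSeq w i := by
  simp only [perSeq, Nat.add_mul_mod_self_right]

lemma perSeq_of_lt (h : i < w.length) : perSeq w i = w.getD i 0 := by
  rw [perSeq, Nat.mod_eq_of_lt h]

lemma perSeq_le (h : ∀ a ∈ w, a ≤ c) (i : ℕ) : perSeq w i ≤ c := by
  rcases lt_or_ge (i % w.length) w.length with hi | hi
  · rw [perSeq, List.getD_eq_getElem _ _ hi]
    exact h _ (List.getElem_mem hi)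
  · rw [perSeq, List.getD_eq_default _ _ hi]
    exact c.zero_le

end Words

section Zeros

variable {m n q : ℕ} {x : ℕ → ℕ} {w : List ℕ}

/-- The zeros of `x` are syndetic with gaps at most `m + 1`; for a binary sequence this says that
the word `1^{m+1}` does not occur in `x`. -/
def HasSyndeticZeros (m : ℕ) (x : ℕ → ℕ) : Prop := ∀ i, ∃ j ≤ m, x (i + j) = 0

/-- The sequence `x` vanishes at `n` and at one of the `m` positions before `n`, so that these two
zeros are closer to each other than consecutive zeros of `(1^m 0)^∞`. -/
def IsCloseZero (m : ℕ) (x : ℕ → ℕ) (n : ℕ) : Prop := x n = 0 ∧ ∃ j < n, n ≤ j + m ∧ x j = 0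

lemma HasSyndeticZeros.shiftN (h : HasSyndeticZeros m x) (q : ℕ) :
    HasSyndeticZeros m (shiftN q x) := by
  intro i
  obtain ⟨j, hj, hzero⟩ := h (i + q)
  exact ⟨j, hj, by rwa [add_right_comm] at hzero⟩

lemma IsCloseZero.of_shiftN (h : IsCloseZero m (shiftN q x) n) : IsCloseZero m x (n + q) := by
  obtain ⟨hn, j, hjn, hnj, hj⟩ := h
  exact ⟨hn, j + q, by omega, by omega, hj⟩

lemma IsCloseZero.shiftN_perSeq (hw : w ≠ []) (h : IsCloseZero m (perSeq w) n) (q : ℕ) :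
    IsCloseZero m (shiftN q (perSeq w)) (n + q * (w.length - 1)) := by
  have hshift (i : ℕ) : shiftN q (perSeq w) (i + q * (w.length - 1)) = perSeq w i := by
    obtain ⟨p, hp⟩ := Nat.exists_eq_succ_of_ne_zero (List.length_pos_iff.2 hw).ne'
    rw [shiftN, ← perSeq_add_mul_length w i q, hp]
    congr 1
    simp only [Nat.succ_eq_add_one, Nat.add_sub_cancel]
    ring
  obtain ⟨hn, j, hjn, hnj, hj⟩ := h
  exact ⟨by rwa [hshift], j + q * (w.length - 1), by omega, by omega, by rwa [hshift]⟩

end Zeros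

section MultinacciSequence

variable {m : ℕ} {x : ℕ → ℕ}

/-- The sequence `(1^m 0)^∞`, which is `δ(β)` for the multinacci base
`β^{m+1} = β^m + ⋯ + β + 1`. -/
def multinacciSeq (m : ℕ) : ℕ → ℕ := fun i => if i % (m + 1) = m then 0 else 1

lemma multinacciSeq_le_one (m i : ℕ) : multinacciSeq m i ≤ 1 := by
  unfold multinacciSeq
  split_ifs <;> decide

lemma multinacciSeq_eq_zero_iff {i : ℕ} : multinacciSeq m i = 0 ↔ i % (m + 1) = m := by
  simp [multinacciSeq]

lemma not_isCloseZero_multinacciSeq (m n : ℕ) : ¬ IsCloseZero m (multinacciSeq m) n := by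
  rintro ⟨hn, j, hjn, hnj, hj⟩
  rw [multinacciSeq_eq_zero_iff] at hn hj
  have hdvd : m + 1 ∣ n - j := (Nat.modEq_iff_dvd' hjn.le).1 (hj.trans hn.symm)
  have := Nat.le_of_dvd (Nat.sub_pos_of_lt hjn) hdvd
  omega

lemma seqLe_multinacciSeq (hx : ∀ i, x i ≤ 1) (hzeros : HasSyndeticZeros m x) :
    seqLe x (multinacciSeq m) := by
  refine seqLe_of_forall_agree_imp_le fun k hagree => ?_
  by_cases hk : multinacciSeq m k = 0
  · have hmk : m ≤ k := (multinacciSeq_eq_zero_iff.1 hk).symm.le.trans (Nat.mod_le _ _)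
    obtain ⟨j, hj, hzero⟩ := hzeros (k - m)
    obtain rfl | hjm := hj.eq_or_lt
    · rw [Nat.sub_add_cancel hmk] at hzero
      exact hzero.le.trans (Nat.zero_le _)
    · rw [hagree _ (by omega)] at hzero
      exact absurd ⟨hk, _, by omega, by omega, hzero⟩ (not_isCloseZero_multinacciSeq m k)
  · exact (hx k).trans (Nat.one_le_iff_ne_zero.2 hk)

lemma exists_isCloseZero_of_seqLt_multinacciSeq (hx : x 0 = 0)
    (hlt : seqLt (shiftN 1 x) (multinacciSeq m)) : ∃ n, IsCloseZero m x n := by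
  obtain ⟨k, hagree, hk⟩ := hlt
  have hk_le := multinacciSeq_le_one m k
  have hmod_ne : k % (m + 1) ≠ m := fun h => by
    rw [multinacciSeq_eq_zero_iff.2 h] at hk
    exact hk.not_ge (Nat.zero_le _)
  have hmod_lt : k % (m + 1) < m + 1 := Nat.mod_lt _ m.succ_pos
  have hdecomp : (m + 1) * (k / (m + 1)) + k % (m + 1) = k := Nat.div_add_mod k (m + 1)
  have hblock : x ((m + 1) * (k / (m + 1))) = 0 := by
    cases hd : k / (m + 1) with
    | zero => simpa using hx
    | succ d =>
      rw [hd, Nat.mul_succ] at hdecomp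
      have hzero : multinacciSeq m ((m + 1) * d + m) = 0 := by
        rw [multinacciSeq_eq_zero_iff, Nat.mul_add_mod, Nat.mod_eq_of_lt m.lt_succ_self]
      rwa [← hagree _ (by omega)] at hzero
  have hk_zero : shiftN 1 x k = 0 := by omega
  exact ⟨k + 1, hk_zero, (m + 1) * (k / (m + 1)), by omega, by omega, hblock⟩

lemma not_eventually_multinacciSeq_eq_zero (hm : 1 ≤ m) :
    ¬ ∃ N, ∀ n, N ≤ n → multinacciSeq m n = 0 := by
  rintro ⟨N, hN⟩
  have h := hN (N * (m + 1)) (Nat.le_mul_of_pos_right N m.succ_pos)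
  rw [multinacciSeq_eq_zero_iff, Nat.mul_mod_left] at h
  omega

end MultinacciSequence

section BetaTransformation

variable {β x y : ℝ}

lemma iterate_Tbeta_mem_Ico (hx : x ∈ Ico (0 : ℝ) 1) (n : ℕ) :
    (Tbeta β)^[n] x ∈ Ico (0 : ℝ) 1 := by
  cases n with
  | zero => exact hx
  | succ n =>
    rw [Function.iterate_succ_apply']
    exact ⟨Int.fract_nonneg _, Int.fract_lt_one _⟩

lemma greedy_iterate_Tbeta (β x : ℝ) (n : ℕ) :
    greedy β ((Tbeta β)^[n] x) = shiftN n (greedy β x) := by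
  funext i
  simp only [greedy, shiftN, Function.iterate_add_apply]

lemma iterate_succ_Tbeta (hβ : 0 ≤ β) (hx : x ∈ Ico (0 : ℝ) 1) (n : ℕ) :
    (Tbeta β)^[n + 1] x = β * (Tbeta β)^[n] x - greedy β x n := by
  have hfloor : 0 ≤ ⌊β * (Tbeta β)^[n] x⌋ :=
    Int.floor_nonneg.2 (mul_nonneg hβ (iterate_Tbeta_mem_Ico hx n).1)
  have hcast : (greedy β x n : ℝ) = ⌊β * (Tbeta β)^[n] x⌋ := by
    exact_mod_cast Int.toNat_of_nonneg hfloor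
  rw [Function.iterate_succ_apply', hcast, Tbeta, Int.self_sub_floor]

lemma greedy_le_one (hβ2 : β ≤ 2) (hx : x ∈ Ico (0 : ℝ) 1) (n : ℕ) :
    greedy β x n ≤ 1 := by
  obtain ⟨h0, h1⟩ := iterate_Tbeta_mem_Ico (β := β) hx n
  have hfloor : ⌊β * (Tbeta β)^[n] x⌋ < 2 := by
    rw [Int.floor_lt]
    push_cast
    nlinarith
  rw [greedy]
  omega

lemma seqLe_greedy_of_le (hβ : 0 ≤ β) (hx : x ∈ Ico (0 : ℝ) 1) (hy : y ∈ Ico (0 : ℝ) 1)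
    (hxy : x ≤ y) : seqLe (greedy β x) (greedy β y) := by
  refine seqLe_of_forall_agree_imp_le fun k hagree => ?_
  have hiterate : ∀ j ≤ k, (Tbeta β)^[j] x ≤ (Tbeta β)^[j] y := by
    intro j hj
    induction j with
    | zero => exact hxy
    | succ j ih =>
      rw [iterate_succ_Tbeta hβ hx, iterate_succ_Tbeta hβ hy, hagree j hj]
      gcongr
      exact ih (Nat.le_of_succ_le hj)
  exact Int.toNat_le_toNat
    (Int.floor_le_floor (mul_le_mul_of_nonneg_left (hiterate k le_rfl) hβ))

lemma sum_greedy_add_iterate_Tbeta (hβ : 0 < β) (hx : x ∈ Ico (0 : ℝ) 1) (n : ℕ) :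
    ∑ i ∈ Finset.range n, (greedy β x i : ℝ) / β ^ (i + 1) + (Tbeta β)^[n] x / β ^ n = x := by
  induction n with
  | zero => simp
  | succ n ih =>
    rw [Finset.sum_range_succ, iterate_succ_Tbeta hβ.le hx]
    conv_rhs => rw [← ih]
    field_simp
    ring

lemma hasSum_greedy (hβ : 1 < β) (hx : x ∈ Ico (0 : ℝ) 1) :
    HasSum (fun i => (greedy β x i : ℝ) / β ^ (i + 1)) x := by
  have hβ0 : 0 < β := zero_lt_one.trans hβ
  rw [hasSum_iff_tendsto_nat_of_nonneg fun i => by positivity]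
  have hremainder : Tendsto (fun n => (Tbeta β)^[n] x / β ^ n) atTop (nhds 0) := by
    refine squeeze_zero (fun n => div_nonneg (iterate_Tbeta_mem_Ico hx n).1 (by positivity))
      (fun n => ?_) (tendsto_inv_atTop_zero.comp (tendsto_pow_atTop_atTop_of_one_lt hβ))
    rw [div_eq_mul_inv]
    exact mul_le_of_le_one_left (by positivity) (iterate_Tbeta_mem_Ico hx n).2.le
  refine (by simpa using hremainder.const_sub x : Tendsto _ _ (nhds x)).congr fun n => ?_
  linarith [sum_greedy_add_iterate_Tbeta hβ0 hx n]

end BetaTransformation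

section Survivors

variable {β t : ℝ}

lemma tendsto_Tbeta_nhdsGE (hβ : 0 ≤ β) (x : ℝ) :
    Tendsto (Tbeta β) (nhdsWithin x (Ici x)) (nhdsWithin (Tbeta β x) (Ici (Tbeta β x))) := by
  have hmul : Tendsto (β * ·) (nhdsWithin x (Ici x)) (nhdsWithin (β * x) (Ici (β * x))) :=
    (continuous_const_mul β).continuousWithinAt.tendsto_nhdsWithin
      fun y (hy : x ≤ y) => mul_le_mul_of_nonneg_left hy hβ
  have hfloor : ∀ᶠ y in nhdsWithin (β * x) (Ici (β * x)), ⌊y⌋ = ⌊β * x⌋ :=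
    tendsto_pure.1 (tendsto_floor_right_pure_floor (β * x))
  have hsub : Tendsto (fun y : ℝ => y - ⌊β * x⌋) (nhdsWithin (β * x) (Ici (β * x)))
      (nhdsWithin (Tbeta β x) (Ici (Tbeta β x))) :=
    (continuous_sub_right (⌊β * x⌋ : ℝ)).continuousWithinAt.tendsto_nhdsWithin
      fun y (hy : β * x ≤ y) => sub_le_sub_right hy _
  refine (hsub.congr' ?_).comp hmul
  filter_upwards [hfloor] with y hy
  rw [← hy, Int.self_sub_floor]

lemma tendsto_iterate_Tbeta_nhdsGE (hβ : 0 ≤ β) (x : ℝ) (n : ℕ) :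
    Tendsto (Tbeta β)^[n] (nhdsWithin x (Ici x))
      (nhdsWithin ((Tbeta β)^[n] x) (Ici ((Tbeta β)^[n] x))) := by
  induction n with
  | zero => exact tendsto_id
  | succ n ih =>
    rw [Function.iterate_succ', Function.comp_apply]
    exact (tendsto_Tbeta_nhdsGE hβ _).comp ih

lemma Kset_antitone (β : ℝ) : Antitone (Kset β) :=
  fun _ _ h _ hx => ⟨hx.1, fun n => h.trans (hx.2 n)⟩

lemma Bset_subset_Eset (β : ℝ) : Bset β ⊆ Eset β :=
  fun _ ht => ⟨ht.1, fun t' htt' ht' heq => ht.2 t' htt' ht' (congrArg dimH heq)⟩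

lemma mem_Kset_self_of_mem_Eset (hβ : 0 ≤ β) (ht : t ∈ Eset β) : t ∈ Kset β t := by
  refine ⟨ht.1, fun n => not_lt.1 fun hlt => ?_⟩
  -- Near `t` on the right, `T_β^n` takes values below `t`, so survivors of `t` cannot visit there.
  have hdrop : ∀ᶠ y in nhdsWithin t (Ici t), (Tbeta β)^[n] y < t :=
    ((tendsto_iterate_Tbeta_nhdsGE hβ t n).mono_right nhdsWithin_le_nhds).eventually_lt_const hlt
  obtain ⟨u, htu, hu⟩ := (mem_nhdsGE_iff_exists_Ico_subset' ht.1.2).1 hdrop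
  obtain ⟨t', htt', ht'⟩ := exists_between (lt_min htu ht.1.2)
  obtain ⟨ht'u, ht'1⟩ := lt_min_iff.1 ht'
  refine ht.2 t' htt' ht'1 (Subset.antisymm (Kset_antitone β htt'.le) fun x hx => ?_)
  refine ⟨hx.1, fun l => not_lt.1 fun hl => ?_⟩
  have hsurvive := hx.2 (n + l)
  rw [Function.iterate_add_apply] at hsurvive
  exact hsurvive.not_gt (hu ⟨hx.2 l, hl.trans ht'u⟩)

lemma seqLe_greedy_shiftN (hβ : 0 ≤ β) (ht : t ∈ Kset β t) (n : ℕ) :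
    seqLe (greedy β t) (shiftN n (greedy β t)) := by
  rw [← greedy_iterate_Tbeta]
  exact seqLe_greedy_of_le hβ ht.1 (iterate_Tbeta_mem_Ico ht.1 n) (ht.2 n)

end Survivors

section MultinacciBase

variable {β t x : ℝ} {m : ℕ} {d : ℕ → ℕ}

lemma sum_one_div_pow_eq_one (hβ : 0 < β) (hm : β ^ (m + 1) = ∑ i ∈ Finset.range (m + 1), β ^ i) :
    ∑ i ∈ Finset.range (m + 1), 1 / β ^ (i + 1) = 1 := by
  rw [← Finset.sum_range_reflect]
  have hterm : ∀ i ∈ Finset.range (m + 1), 1 / β ^ (m + 1 - 1 - i + 1) = β ^ i / β ^ (m + 1) := by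
    intro i hi
    rw [div_eq_div_iff (by positivity) (by positivity), one_mul, ← pow_add]
    congr 1
    have := Finset.mem_range.1 hi
    omega
  rw [Finset.sum_congr rfl hterm, ← Finset.sum_div, ← hm, div_self (by positivity)]

lemma tsum_multinacciSeq (hβ : 1 < β) (hsum : ∑ i ∈ Finset.range (m + 1), 1 / β ^ (i + 1) = 1) :
    ∑' i, (multinacciSeq m i : ℝ) / β ^ (i + 1) = 1 := by
  have hβ0 : 0 < β := zero_lt_one.trans hβ
  set f : ℕ → ℝ := fun i => (multinacciSeq m i : ℝ) / β ^ (i + 1) with hf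
  have hgeom : Summable fun i => 1 / β ^ (i + 1) := by
    simpa only [one_div, inv_pow] using (summable_nat_add_iff 1).2
      (summable_geometric_of_lt_one (inv_nonneg.2 hβ0.le) (inv_lt_one_of_one_lt₀ hβ))
  have hsummable : Summable f := by
    refine .of_nonneg_of_le (fun i => by positivity) (fun i => ?_) hgeom
    simp only [hf]
    gcongr
    exact_mod_cast multinacciSeq_le_one m i
  have hblock : ∑ i ∈ Finset.range (m + 1), f i = 1 - 1 / β ^ (m + 1) := by
    rw [Finset.sum_range_succ] at hsum
    rw [Finset.sum_range_succ]
    have hlast : f m = 0 := by simp [hf, multinacciSeq]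
    have hinit : ∀ i ∈ Finset.range m, f i = 1 / β ^ (i + 1) := by
      intro i hi
      have hi := Finset.mem_range.1 hi
      simp [hf, multinacciSeq, Nat.mod_eq_of_lt (hi.trans m.lt_succ_self), hi.ne]
    rw [hlast, add_zero, Finset.sum_congr rfl hinit]
    exact eq_sub_of_add_eq hsum
  have hperiod (i : ℕ) : f (i + (m + 1)) = 1 / β ^ (m + 1) * f i := by
    simp only [hf, multinacciSeq, Nat.add_mod_right]
    rw [div_mul_div_comm, one_mul, ← pow_add]
    congr 2
    ring
  have hsplit := hsummable.sum_add_tsum_nat_add (m + 1)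
  rw [hblock, tsum_congr hperiod, tsum_mul_left] at hsplit
  have hlt : 1 / β ^ (m + 1) < 1 := (div_lt_one (by positivity)).2 (one_lt_pow₀ hβ m.succ_ne_zero)
  refine mul_left_cancel₀ (sub_ne_zero.2 hlt.ne') ?_
  linarith

lemma IsQuasiGreedy.multinacciSeq_seqLe (hd : IsQuasiGreedy β d) (hβ : 1 < β) (hm : 1 ≤ m)
    (hsum : ∑ i ∈ Finset.range (m + 1), 1 / β ^ (i + 1) = 1) : seqLe (multinacciSeq m) d :=
  hd.2.2.2 _ (multinacciSeq_le_one m) (not_eventually_multinacciSeq_eq_zero hm)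
    (tsum_multinacciSeq hβ hsum)

lemma hasSyndeticZeros_greedy (hβ : 0 < β) (hx : x ∈ Ico (0 : ℝ) 1)
    (hsum : ∑ i ∈ Finset.range (m + 1), 1 / β ^ (i + 1) = 1) :
    HasSyndeticZeros m (greedy β x) := by
  intro i
  by_contra! hones
  have hdigits : ∀ j ∈ Finset.range (m + 1),
      1 / β ^ (j + 1) ≤ (greedy β ((Tbeta β)^[i] x) j : ℝ) / β ^ (j + 1) := by
    intro j hj
    rw [greedy_iterate_Tbeta, shiftN, add_comm j i]
    gcongr
    exact_mod_cast Nat.one_le_iff_ne_zero.2 (hones j (Finset.mem_range_succ_iff.1 hj))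
  have hi := iterate_Tbeta_mem_Ico (β := β) hx i
  have hremainder := (iterate_Tbeta_mem_Ico (β := β) hi (m + 1)).1
  have hge : 1 ≤ (Tbeta β)^[i] x := by
    rw [← hsum, ← sum_greedy_add_iterate_Tbeta hβ hi (m + 1)]
    exact le_add_of_le_of_nonneg (Finset.sum_le_sum hdigits) (by positivity)
  exact hi.2.not_ge hge

lemma greedy_seqLt_multinacciSeq (hβ : 1 < β) (hβ2 : β ≤ 2) (hx : x ∈ Ico (0 : ℝ) 1)
    (hsum : ∑ i ∈ Finset.range (m + 1), 1 / β ^ (i + 1) = 1) :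
    seqLt (greedy β x) (multinacciSeq m) := by
  have hβ0 : 0 < β := zero_lt_one.trans hβ
  refine (seqLe_multinacciSeq (greedy_le_one hβ2 hx)
    (hasSyndeticZeros_greedy hβ0 hx hsum)).resolve_left fun heq => hx.2.ne ?_
  rw [← (hasSum_greedy hβ hx).tsum_eq, heq, tsum_multinacciSeq hβ hsum]

lemma frequently_isCloseZero_greedy (hβ : 1 < β) (hβ2 : β ≤ 2) (hx : x ∈ Ico (0 : ℝ) 1)
    (hsum : ∑ i ∈ Finset.range (m + 1), 1 / β ^ (i + 1) = 1) :
    ∃ᶠ n in atTop, IsCloseZero m (greedy β x) n := by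
  refine frequently_atTop.2 fun N => ?_
  obtain ⟨j, -, hzero⟩ := hasSyndeticZeros_greedy (zero_lt_one.trans hβ) hx hsum N
  have hlt : seqLt (shiftN 1 (shiftN (N + j) (greedy β x))) (multinacciSeq m) := by
    rw [← greedy_iterate_Tbeta, ← greedy_iterate_Tbeta]
    exact greedy_seqLt_multinacciSeq hβ hβ2
      (iterate_Tbeta_mem_Ico (iterate_Tbeta_mem_Ico hx _) _) hsum
  obtain ⟨n, hn⟩ := exists_isCloseZero_of_seqLt_multinacciSeq (by simpa [shiftN] using hzero) hlt
  exact ⟨n + (N + j), by omega, hn.of_shiftN⟩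

end MultinacciBase

section RaisedPrefix

variable {b : ℕ → ℕ} {m n i k : ℕ}

/-- The word `b_0 … b_{n-1} 1`. It is used when `b n = 0`, to approximate `b` lexicographically
from above. -/
def raisedPrefix (b : ℕ → ℕ) (n : ℕ) : List ℕ := (List.range n).map b ++ [1]

lemma length_raisedPrefix (b : ℕ → ℕ) (n : ℕ) : (raisedPrefix b n).length = n + 1 := by
  simp [raisedPrefix]

lemma raisedPrefix_ne_nil (b : ℕ → ℕ) (n : ℕ) : raisedPrefix b n ≠ [] :=
  List.append_ne_nil_of_right_ne_nil _ (List.cons_ne_nil 1 [])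

lemma getD_raisedPrefix_of_lt (b : ℕ → ℕ) (h : i < n) : (raisedPrefix b n).getD i 0 = b i := by
  simp [raisedPrefix, List.getElem?_append, h]

lemma getD_raisedPrefix_self (b : ℕ → ℕ) (n : ℕ) : (raisedPrefix b n).getD n 0 = 1 := by
  simp [raisedPrefix]

lemma perSeq_raisedPrefix_of_lt (b : ℕ → ℕ) (h : i < n) : perSeq (raisedPrefix b n) i = b i := by
  rw [perSeq_of_lt (by rw [length_raisedPrefix]; omega), getD_raisedPrefix_of_lt b h]

lemma le_one_of_mem_raisedPrefix (hb : ∀ i, b i ≤ 1) : ∀ a ∈ raisedPrefix b n, a ≤ 1 := by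
  intro a ha
  simp only [raisedPrefix, List.mem_append, List.mem_map, List.mem_singleton] at ha
  obtain ⟨i, -, rfl⟩ | rfl := ha
  · exact hb i
  · exact le_rfl

lemma seqLt_take_drop_raisedPrefix (hb : seqLe b (shiftN i b)) (hn : b n = 0) (hi : 1 ≤ i)
    (hin : i ≤ n) :
    seqLt (wordSeq ((raisedPrefix b n).take (n + 1 - i)))
      (wordSeq ((raisedPrefix b n).drop i)) := by
  have htake : ∀ l ≤ n - i, wordSeq ((raisedPrefix b n).take (n + 1 - i)) l = b l := fun l hl => by
    rw [wordSeq_take_of_lt (by omega), getD_raisedPrefix_of_lt b (by omega)]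
  have hdrop : ∀ l < n - i, wordSeq ((raisedPrefix b n).drop i) l = b (l + i) := fun l hl => by
    rw [wordSeq_drop, shiftN, wordSeq, getD_raisedPrefix_of_lt b (by omega)]
  obtain ⟨l, hl, hagree, hlt⟩ | ⟨hagree, hle⟩ := hb.lt_before_or_le_at (n - i)
  · refine ⟨l, fun j hj => ?_, ?_⟩
    · rw [htake j (by omega), hdrop j (by omega), hagree j hj, shiftN]
    · rwa [htake l hl.le, hdrop l hl]
  · refine ⟨n - i, fun j hj => ?_, ?_⟩
    · rw [htake j hj.le, hdrop j hj, hagree j hj, shiftN]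
    · rw [shiftN, Nat.sub_add_cancel hin, hn] at hle
      rw [htake _ le_rfl, wordSeq_drop, shiftN, Nat.sub_add_cancel hin, wordSeq,
        getD_raisedPrefix_self]
      omega

lemma IsCloseZero.perSeq_raisedPrefix (hk : IsCloseZero m b k) (hkn : k < n) :
    IsCloseZero m (perSeq (raisedPrefix b n)) k := by
  obtain ⟨hzero, j, hjk, hkj, hj⟩ := hk
  exact ⟨by rwa [perSeq_raisedPrefix_of_lt b hkn], j, hjk, hkj,
    by rwa [perSeq_raisedPrefix_of_lt b (hjk.trans hkn)]⟩

lemma HasSyndeticZeros.perSeq_raisedPrefix (hzeros : HasSyndeticZeros m b) (hb0 : b 0 = 0)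
    (hn : IsCloseZero m b n) : HasSyndeticZeros m (perSeq (raisedPrefix b n)) := by
  intro i
  obtain ⟨-, k, hkn, hnk, hk⟩ := hn
  set c := i % (n + 1) with hc
  have hcn : c < n + 1 := Nat.mod_lt _ n.succ_pos
  have hreduce (j : ℕ) :
      perSeq (raisedPrefix b n) (i + j) = perSeq (raisedPrefix b n) (c + j) := by
    simp only [perSeq, length_raisedPrefix, hc, Nat.mod_add_mod]
  simp only [hreduce]
  obtain ⟨j, hj, hzero⟩ := hzeros c
  by_cases hcj : c + j < n
  · exact ⟨j, hj, by rwa [perSeq_raisedPrefix_of_lt b hcj]⟩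
  by_cases hck : c ≤ k
  · refine ⟨k - c, by omega, ?_⟩
    rwa [Nat.add_sub_cancel' hck, perSeq_raisedPrefix_of_lt b hkn]
  · refine ⟨n + 1 - c, by omega, ?_⟩
    have hwrap := perSeq_add_mul_length (raisedPrefix b n) 0 1
    rw [length_raisedPrefix, zero_add, one_mul] at hwrap
    rw [Nat.add_sub_cancel' hcn.le, hwrap, perSeq_raisedPrefix_of_lt b (by omega), hb0]

lemma shiftN_perSeq_raisedPrefix_seqLt (hb : ∀ i, b i ≤ 1) (hzeros : HasSyndeticZeros m b)
    (hb0 : b 0 = 0) (hk : IsCloseZero m b k) (hkn : k < n) (hn : IsCloseZero m b n) (q : ℕ) :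
    seqLt (shiftN q (perSeq (raisedPrefix b n))) (multinacciSeq m) := by
  have hle : seqLe (shiftN q (perSeq (raisedPrefix b n))) (multinacciSeq m) :=
    seqLe_multinacciSeq (fun _ => perSeq_le (le_one_of_mem_raisedPrefix hb) _)
      ((hzeros.perSeq_raisedPrefix hb0 hn).shiftN q)
  refine hle.resolve_left fun heq => ?_
  have hclose := (hk.perSeq_raisedPrefix hkn).shiftN_perSeq (raisedPrefix_ne_nil b n) q
  rw [heq] at hclose
  exact not_isCloseZero_multinacciSeq m _ hclose

theorem isBetaLyndon_raisedPrefix {β : ℝ} (hβ : 1 < β) (hm : 1 ≤ m)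
    (hsum : ∑ i ∈ Finset.range (m + 1), 1 / β ^ (i + 1) = 1) (hb : ∀ i, b i ≤ 1)
    (hzeros : HasSyndeticZeros m b) (hshift : ∀ i, seqLe b (shiftN i b))
    (hk : IsCloseZero m b k) (hkn : k < n) (hn : IsCloseZero m b n) :
    IsBetaLyndon β (raisedPrefix b n) := by
  have hb0 : b 0 = 0 := by
    obtain ⟨_, hl, -⟩ | ⟨_, hle⟩ := (hshift n).lt_before_or_le_at 0
    · exact absurd hl (Nat.not_lt_zero _)
    · rw [shiftN, zero_add, hn.1] at hle
      exact Nat.le_zero.1 hle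
  refine ⟨raisedPrefix_ne_nil b n, le_one_of_mem_raisedPrefix hb, ?_, fun d hd q => ?_⟩
  · rw [length_raisedPrefix]
    exact fun i hi hin =>
      seqLt_take_drop_raisedPrefix (hshift i) hn.1 hi (Nat.lt_succ_iff.1 hin)
  · exact (shiftN_perSeq_raisedPrefix_seqLt hb hzeros hb0 hk hkn hn q).trans_seqLe
      (hd.multinacciSeq_seqLe hβ hm hsum)

end RaisedPrefix

section LyndonIntervals

variable {β t u : ℝ} {n : ℕ}

lemma lyndonLeft_lt_lyndonRight (hβ : 1 < β) {s : List ℕ} (hs : s ≠ [])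
    (hpos : 0 < lyndonLeft β s) : lyndonLeft β s < lyndonRight β s := by
  have hpow : 1 < β ^ s.length := one_lt_pow₀ hβ (List.length_pos_iff.2 hs).ne'
  refine lt_mul_of_one_lt_left hpos ((one_lt_div (sub_pos.2 hpow)).2 ?_)
  exact sub_lt_self _ zero_lt_one

lemma lyndonLeft_raisedPrefix (β : ℝ) (b : ℕ → ℕ) (n : ℕ) :
    lyndonLeft β (raisedPrefix b n) =
      ∑ i ∈ Finset.range n, (b i : ℝ) / β ^ (i + 1) + 1 / β ^ (n + 1) := by
  rw [lyndonLeft, length_raisedPrefix, Finset.sum_range_succ, getD_raisedPrefix_self, Nat.cast_one]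
  congr 1
  refine Finset.sum_congr rfl fun i hi => ?_
  rw [getD_raisedPrefix_of_lt b (Finset.mem_range.1 hi)]

lemma lyndonLeft_raisedPrefix_greedy_mem_Ioc (hβ : 0 < β) (ht : t ∈ Ico (0 : ℝ) 1)
    (hn : greedy β t n = 0) :
    lyndonLeft β (raisedPrefix (greedy β t) n) ∈ Ioc t (t + 1 / β ^ (n + 1)) := by
  have hexpand := sum_greedy_add_iterate_Tbeta hβ ht (n + 1)
  rw [Finset.sum_range_succ, hn, Nat.cast_zero, zero_div, add_zero] at hexpand
  obtain ⟨h0, h1⟩ := iterate_Tbeta_mem_Ico (β := β) ht (n + 1)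
  have hnonneg : 0 ≤ (Tbeta β)^[n + 1] t / β ^ (n + 1) := by positivity
  have hlt : (Tbeta β)^[n + 1] t / β ^ (n + 1) < 1 / β ^ (n + 1) := by gcongr
  rw [lyndonLeft_raisedPrefix]
  constructor <;> linarith

lemma eventually_lyndonRight_raisedPrefix_greedy_lt (hβ : 1 < β) (ht : t ∈ Ico (0 : ℝ) 1)
    (htu : t < u) :
    ∀ᶠ n in atTop, greedy β t n = 0 → lyndonRight β (raisedPrefix (greedy β t) n) < u := by
  have hβ0 : 0 < β := zero_lt_one.trans hβ
  have hinv : Tendsto (fun n => (β ^ (n + 1))⁻¹) atTop (nhds 0) :=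
    tendsto_inv_atTop_zero.comp
      ((tendsto_pow_atTop_atTop_of_one_lt hβ).comp (tendsto_add_atTop_nat 1))
  have hbound : Tendsto (fun n => (1 - (β ^ (n + 1))⁻¹)⁻¹ * (t + (β ^ (n + 1))⁻¹)) atTop
      (nhds t) := by
    simpa using ((hinv.const_sub 1).inv₀ (by simp)).mul (hinv.const_add t)
  filter_upwards [hbound.eventually_lt_const htu] with n hlt hn
  refine lt_of_le_of_lt ?_ hlt
  have hpow : 1 < β ^ (n + 1) := one_lt_pow₀ hβ n.succ_ne_zero
  have hleft := (lyndonLeft_raisedPrefix_greedy_mem_Ioc hβ0 ht hn).2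
  have hfactor : β ^ (n + 1) / (β ^ (n + 1) - 1) = (1 - (β ^ (n + 1))⁻¹)⁻¹ := by
    have := sub_pos.2 hpow
    field_simp
  rw [one_div] at hleft
  rw [lyndonRight, length_raisedPrefix, hfactor]
  have := sub_pos.2 (inv_lt_one_of_one_lt₀ hpow)
  gcongr

theorem exists_isBetaLyndon_Ico_subset_Ioo (hβ : β ∈ Ioo (1 : ℝ) 2) (hmulti : IsMultinacci β)
    (ht : t ∈ Kset β t) (htu : t < u) :
    ∃ s, IsBetaLyndon β s ∧ (Ico (lyndonLeft β s) (lyndonRight β s)).Nonempty ∧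
      Ico (lyndonLeft β s) (lyndonRight β s) ⊆ Ioo t u := by
  obtain ⟨m, hm, hpow⟩ := hmulti
  have hβ0 : 0 < β := zero_lt_one.trans hβ.1
  have hsum := sum_one_div_pow_eq_one hβ0 hpow
  have hfreq := frequently_isCloseZero_greedy hβ.1 hβ.2.le ht.1 hsum
  obtain ⟨k, hk⟩ := hfreq.exists
  obtain ⟨n, hn, hkn, hright⟩ := (hfreq.and_eventually ((eventually_gt_atTop k).and
    (eventually_lyndonRight_raisedPrefix_greedy_lt hβ.1 ht.1 htu))).exists
  have hLyndon : IsBetaLyndon β (raisedPrefix (greedy β t) n) :=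
    isBetaLyndon_raisedPrefix hβ.1 hm hsum (greedy_le_one hβ.2.le ht.1)
      (hasSyndeticZeros_greedy hβ0 ht.1 hsum)
      (seqLe_greedy_shiftN hβ0.le ht) hk hkn hn
  have hleft := (lyndonLeft_raisedPrefix_greedy_mem_Ioc hβ0 ht.1 hn.1).1
  exact ⟨_, hLyndon,
    nonempty_Ico.2 (lyndonLeft_lt_lyndonRight hβ.1 hLyndon.1 (ht.1.1.trans_lt hleft)),
    fun y hy => ⟨hleft.trans_le hy.1, hy.2.trans (hright hn.1)⟩⟩

end LyndonIntervals

theorem stmt_11_general (β : ℝ) (hβ : β ∈ Set.Ioo (1 : ℝ) 2) (hmulti : IsMultinacci β) :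
    ∀ t ∈ Eset β, ∀ r : ℝ, 0 < r →
      {I : Set ℝ | (∃ s : List ℕ, IsBetaLyndon β s ∧
        I = Set.Ico (lyndonLeft β s) (lyndonRight β s)) ∧
        I ⊆ Set.Ioo t (t + r)}.Infinite := by
  intro t ht r hr
  refine infinite_of_forall_gt_exists_subset_Ioo (t := t) fun u htu => ?_
  have hself : t ∈ Kset β t := mem_Kset_self_of_mem_Eset (zero_lt_one.trans hβ.1).le ht
  obtain ⟨s, hs, hne, hsub⟩ := exists_isBetaLyndon_Ico_subset_Ioo hβ hmulti hself
    (lt_min htu (lt_add_of_pos_right t hr))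
  exact ⟨_, ⟨⟨s, hs, rfl⟩, hsub.trans (Ioo_subset_Ioo_right (min_le_right _ _))⟩, hne,
    hsub.trans (Ioo_subset_Ioo_right (min_le_left _ _))⟩

/-- For a multinacci `β ∈ (1,2)`, every `t ∈ B_β` and every `r > 0`,
the interval `(t, t + r)` contains infinitely many β-Lyndon intervals. -/
theorem stmt_11 (β : ℝ) (hβ : β ∈ Set.Ioo (1 : ℝ) 2) (hmulti : IsMultinacci β) :
    ∀ t ∈ Bset β, ∀ r : ℝ, 0 < r →
      {I : Set ℝ | (∃ s : List ℕ, IsBetaLyndon β s ∧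
        I = Set.Ico (lyndonLeft β s) (lyndonRight β s)) ∧
        I ⊆ Set.Ioo t (t + r)}.Infinite :=
  fun t ht => stmt_11_general β hβ hmulti t (Bset_subset_Eset β ht)
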